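/- One-dimensional surgery estimate: Let ω be a locally finite positive Borel measure on ℝ, let J and R be intervals that are ρ-close (2^{−ρ}ℓ(R) ≤ ℓ(J) ≤ 2^{ρ}ℓ(R), J ⊂ 3R or R ⊂ 3J, touching or contained), and let λ ∈ (0,1/2). Let (J+γ)_λ^{left} = (J+γ)_− ∖ (J+γ)_λ be the left boundary piece of width λℓ(J), where (J+γ)_− is the left half of J+γ. Then the average over translations γ of step λℓ(J) satisfies (1/Λ) Σ_γ ∫_{(J+γ)_λ^{left}} |Δ_{J+γ}^ω 1_R|² dω ≤ C √λ ω(R), where Λ is the number of translations and C depends only on ρ. The same bound holds for the right boundary pieces. -/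

import Mathlib

open MeasureTheory Set Filter Topology
open scoped ENNReal NNReal Classical

noncomputable section

/-- Euclidean space `ℝⁿ`. -/
abbrev Pt (n : ℕ) : Type := EuclideanSpace ℝ (Fin n)

/-- An axis-parallel half-open cube in `ℝⁿ`, given by its corner `c` and positive
side length `l`. -/
structure Cube (n : ℕ) : Type where
  c : Pt n
  l : ℝ
  lpos : 0 < l

namespace Cube

variable {n : ℕ}

/-- The underlying (half-open) set of the cube. -/
def set (Q : Cube n) : Set (Pt n) := {x | ∀ i, Q.c i ≤ x i ∧ x i < Q.c i + Q.l}

/-- The center of the cube. -/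
def center (Q : Cube n) : Pt n := WithLp.toLp 2 fun i => Q.c i + Q.l / 2

/-- The concentric triple `3Q`. -/
def tri (Q : Cube n) : Cube n := ⟨WithLp.toLp 2 fun i => Q.c i - Q.l, 3 * Q.l, by have := Q.lpos; linarith⟩

/-- The dyadic child of a cube indexed by `e : Fin n → Bool`. -/
def child (Q : Cube n) (e : Fin n → Bool) : Cube n :=
  ⟨WithLp.toLp 2 fun i => Q.c i + (if e i then Q.l / 2 else 0), Q.l / 2, by have := Q.lpos; linarith⟩

/-- The translate `Q + γ` of a cube. -/
def trans (Q : Cube n) (γ : Pt n) : Cube n := ⟨WithLp.toLp 2 fun i => Q.c i + γ i, Q.l, Q.lpos⟩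

/-- The `λ`-interior `Q_λ = {x ∈ Q : dist(x,∂Q) > λ ℓ(Q)}` of a cube. -/
def inn (Q : Cube n) (lam : ℝ) : Set (Pt n) :=
  {x ∈ Q.set | lam * Q.l < Metric.infDist x (frontier Q.set)}

end Cube

/-- The distance between two sets, as an extended nonnegative real. -/
def sDistE {n : ℕ} (s t : Set (Pt n)) : ℝ≥0∞ := ⨅ (x ∈ s) (y ∈ t), edist x y

/-- Side lengths comparable within a factor `Cc` : `1/Cc ≤ ℓ(Q)/ℓ(Q') ≤ Cc`. -/
def sideComp {n : ℕ} (Cc : ℝ) (Q Q' : Cube n) : Prop := Q.l ≤ Cc * Q'.l ∧ Q'.l ≤ Cc * Q.l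

/-- Two cubes touch if their closures intersect, and the intersection is contained in
the boundary of the larger cube. -/
def Touching {n : ℕ} (Q R : Cube n) : Prop :=
  (closure Q.set ∩ closure R.set).Nonempty ∧
  (Q.l ≤ R.l → closure Q.set ∩ closure R.set ⊆ frontier R.set) ∧
  (R.l ≤ Q.l → closure Q.set ∩ closure R.set ⊆ frontier Q.set)

/-- The indicator function of a set. -/
def indic {n : ℕ} (s : Set (Pt n)) : Pt n → ℝ := s.indicator 1

/-- A standard `α`-fractional Calderón–Zygmund kernel in `ℝⁿ`: size and smoothness of
order `1 + δ`, for the kernel and its adjoint. -/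
structure CZKernel (n : ℕ) (α : ℝ) : Type where
  K : Pt n → Pt n → ℝ
  C₀ : ℝ
  Cpos : 0 < C₀
  δ : ℝ
  δpos : 0 < δ
  size : ∀ x y : Pt n, x ≠ y → |K x y| ≤ C₀ * ‖x - y‖ ^ (α - n)
  gradSize : ∀ x y : Pt n, x ≠ y →
    ‖fderiv ℝ (fun z => K z y) x‖ ≤ C₀ * ‖x - y‖ ^ (α - n - 1)
  gradHolder : ∀ x x' y : Pt n, x ≠ y → ‖x - x'‖ ≤ ‖x - y‖ / 2 →
    ‖fderiv ℝ (fun z => K z y) x - fderiv ℝ (fun z => K z y) x'‖ ≤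
      C₀ * (‖x - x'‖ / ‖x - y‖) ^ δ * ‖x - y‖ ^ (α - n - 1)
  gradSizeAdj : ∀ x y : Pt n, x ≠ y →
    ‖fderiv ℝ (fun z => K x z) y‖ ≤ C₀ * ‖x - y‖ ^ (α - n - 1)
  gradHolderAdj : ∀ x y y' : Pt n, x ≠ y → ‖y - y'‖ ≤ ‖x - y‖ / 2 →
    ‖fderiv ℝ (fun z => K x z) y - fderiv ℝ (fun z => K x z) y'‖ ≤
      C₀ * (‖y - y'‖ / ‖x - y‖) ^ δ * ‖x - y‖ ^ (α - n - 1)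

/-- A (tangent line type) truncation of a CZ kernel: a bounded kernel, vanishing on the
diagonal, compactly supported, agreeing with `K` in the annulus `d ≤ |x-y| ≤ r`. -/
structure Truncation {n : ℕ} {α : ℝ} (K : CZKernel n α) : Type where
  Kt : Pt n → Pt n → ℝ
  d : ℝ
  r : ℝ
  dpos : 0 < d
  dlt : d < r
  bounded : ∃ M, ∀ x y, |Kt x y| ≤ M
  diag : ∀ x, Kt x x = 0
  agrees : ∀ x y : Pt n, d ≤ ‖x - y‖ → ‖x - y‖ ≤ r → Kt x y = K.K x y
  compactsupp : ∃ S, ∀ x y : Pt n, S ≤ ‖x - y‖ → Kt x y = 0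

/-- The truncated operator `T^α_μ f (x) = ∫ K_t(x,y) f(y) dμ(y)`. -/
def Truncation.op {n : ℕ} {α : ℝ} {K : CZKernel n α} (τ : Truncation K)
    (μ : Measure (Pt n)) (f : Pt n → ℝ) (x : Pt n) : ℝ := ∫ y, τ.Kt x y * f y ∂μ

/-- The truncated dual operator `(T^α)^*_μ g (x) = ∫ K_t(y,x) g(y) dμ(y)`. -/
def Truncation.opAdj {n : ℕ} {α : ℝ} {K : CZKernel n α} (τ : Truncation K)
    (μ : Measure (Pt n)) (g : Pt n → ℝ) (x : Pt n) : ℝ := ∫ y, τ.Kt y x * g y ∂μ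

/-- The two-weight norm constant `𝔑_{T^α}(σ,ω)`, uniform over all truncations. -/
def normConst {n : ℕ} {α : ℝ} (K : CZKernel n α) (σ ω : Measure (Pt n)) : ℝ≥0∞ :=
  sInf {N : ℝ≥0∞ | ∀ τ : Truncation K, ∀ f : Pt n → ℝ,
    ∫⁻ x, ENNReal.ofReal ((τ.op σ f x) ^ 2) ∂ω ≤ N ^ 2 * ∫⁻ x, ENNReal.ofReal ((f x) ^ 2) ∂σ}

/-- The (quasi)cube `Ω Q` associated to a cube `Q` and a globally biLipschitz map `Ω`;
for ordinary cubes take `Ω = id`. -/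
def qset {n : ℕ} (Om : Pt n → Pt n) (Q : Cube n) : Set (Pt n) := Om '' Q.set

/-- The (quasi)cube testing constant `𝔗_{T^α}(σ,ω)`, uniform over all truncations. -/
def testConst {n : ℕ} {α : ℝ} (Om : Pt n → Pt n) (K : CZKernel n α)
    (σ ω : Measure (Pt n)) : ℝ≥0∞ :=
  sInf {T : ℝ≥0∞ | ∀ τ : Truncation K, ∀ Q : Cube n,
    ∫⁻ x in qset Om Q, ENNReal.ofReal ((τ.op σ (indic (qset Om Q)) x) ^ 2) ∂ω ≤
      T ^ 2 * σ (qset Om Q)}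

/-- The dual (quasi)cube testing constant `𝔗^*_{T^α}(σ,ω)`. -/
def testConstDual {n : ℕ} {α : ℝ} (Om : Pt n → Pt n) (K : CZKernel n α)
    (σ ω : Measure (Pt n)) : ℝ≥0∞ :=
  sInf {T : ℝ≥0∞ | ∀ τ : Truncation K, ∀ Q : Cube n,
    ∫⁻ x in qset Om Q, ENNReal.ofReal ((τ.opAdj ω (indic (qset Om Q)) x) ^ 2) ∂σ ≤
      T ^ 2 * ω (qset Om Q)}

/-- The weak boundedness constant `𝒲ℬ𝒫_{T^α}(σ,ω)` with comparability constant `Cc`. -/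
def wbpConst {n : ℕ} {α : ℝ} (K : CZKernel n α) (Cc : ℝ) (σ ω : Measure (Pt n)) : ℝ≥0∞ :=
  sInf {W : ℝ≥0∞ | ∀ τ : Truncation K, ∀ Q Q' : Cube n, sideComp Cc Q Q' →
    (Q.set ⊆ Q'.tri.set \ Q'.set ∨ Q'.set ⊆ Q.tri.set \ Q.set) →
    ENNReal.ofReal |∫ x in Q.set, τ.op σ (indic Q'.set) x ∂ω| ≤
      W * (ω Q.set) ^ (1/2 : ℝ) * (σ Q'.set) ^ (1/2 : ℝ)}

/-- The indicator/touching constant `𝔍_{T^α}(σ,ω)` with comparability constant `Cc`. -/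
def indTouchConst {n : ℕ} {α : ℝ} (K : CZKernel n α) (Cc : ℝ) (σ ω : Measure (Pt n)) : ℝ≥0∞ :=
  sInf {Jc : ℝ≥0∞ | ∀ τ : Truncation K, ∀ Q Q' : Cube n, Touching Q Q' → sideComp Cc Q Q' →
    (Q.set ⊆ Q'.tri.set \ Q'.set ∨ Q'.set ⊆ Q.tri.set \ Q.set) →
    ENNReal.ofReal |∫ x in Q'.set, τ.op σ (indic Q.set) x ∂ω| ≤
      Jc * (σ Q.set) ^ (1/2 : ℝ) * (ω Q'.set) ^ (1/2 : ℝ)}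

/-- The reproducing Poisson integral `𝒫^α(ΩQ, μ)`. -/
def repPoisson {n : ℕ} (α : ℝ) (Om : Pt n → Pt n) (Q : Cube n) (μ : Measure (Pt n)) : ℝ≥0∞ :=
  ∫⁻ x, ENNReal.ofReal ((Q.l / (Q.l + ‖x - Om Q.center‖) ^ 2) ^ ((n : ℝ) - α)) ∂μ

/-- The standard Poisson integral `P^α(ΩQ, μ)`. -/
def stdPoisson {n : ℕ} (α : ℝ) (Om : Pt n → Pt n) (Q : Cube n) (μ : Measure (Pt n)) : ℝ≥0∞ :=
  ∫⁻ x, ENNReal.ofReal (Q.l / (Q.l + ‖x - Om Q.center‖) ^ ((n : ℝ) + 1 - α)) ∂μ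

/-- The one-tailed Muckenhoupt constant `𝒜₂^α(σ,ω)`. -/
def a2tail {n : ℕ} (α : ℝ) (Om : Pt n → Pt n) (σ ω : Measure (Pt n)) : ℝ≥0∞ :=
  ⨆ Q : Cube n, repPoisson α Om Q (σ.restrict (qset Om Q)ᶜ) * ω (qset Om Q) /
    ENNReal.ofReal (Q.l ^ ((n : ℝ) - α))

/-- The set of common point masses of `σ` and `ω`. -/
def commonAtoms {n : ℕ} (σ ω : Measure (Pt n)) : Set (Pt n) := {p | 0 < σ {p} ∧ 0 < ω {p}}

/-- The punctured mass `ω(Q, 𝔓_{(σ,ω)})`. -/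
def punctMass {n : ℕ} (σ ω : Measure (Pt n)) (Om : Pt n → Pt n) (Q : Cube n) : ℝ≥0∞ :=
  ω (qset Om Q) - ⨆ p ∈ qset Om Q ∩ commonAtoms σ ω, ω {p}

/-- The punctured Muckenhoupt constant `A₂^{α,punct}(σ,ω)`. -/
def a2punct {n : ℕ} (α : ℝ) (Om : Pt n → Pt n) (σ ω : Measure (Pt n)) : ℝ≥0∞ :=
  ⨆ Q : Cube n, (punctMass σ ω Om Q / ENNReal.ofReal (Q.l ^ ((n : ℝ) - α))) *
    (σ (qset Om Q) / ENNReal.ofReal (Q.l ^ ((n : ℝ) - α)))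

/-- The full Muckenhoupt constant `𝔄₂^α = 𝒜₂^α + 𝒜₂^{α,*} + A₂^{α,punct} + A₂^{α,*,punct}`. -/
def muckA2 {n : ℕ} (α : ℝ) (Om : Pt n → Pt n) (σ ω : Measure (Pt n)) : ℝ≥0∞ :=
  a2tail α Om σ ω + a2tail α Om ω σ + a2punct α Om σ ω + a2punct α Om ω σ

/-- The dyadic cube of the grid translated by `t`, of scale `k` and position `m`. -/
def dCube {n : ℕ} (t : Pt n) (k : ℤ) (m : Fin n → ℤ) : Cube n :=
  ⟨WithLp.toLp 2 fun i => t i + (2:ℝ) ^ k * m i, (2:ℝ) ^ k, by positivity⟩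

/-- The dyadic grid with origin `t`. -/
def gridCubes {n : ℕ} (t : Pt n) : Set (Cube n) := {Q | ∃ k m, Q = dCube t k m}

/-- Alternate dyadic cubes: unions of `2ⁿ` grid cubes of half the side length. -/
def altCubes {n : ℕ} (t : Pt n) : Set (Cube n) :=
  {Q | ∃ (k : ℤ) (m : Fin n → ℤ), Q.l = (2:ℝ) ^ k ∧ ∀ i, Q.c i = t i + (2:ℝ) ^ (k - 1) * m i}

/-- The `μ`-average of `f` over `s`. -/
def cubeAvg {n : ℕ} (μ : Measure (Pt n)) (s : Set (Pt n)) (f : Pt n → ℝ) : ℝ :=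
  (∫ x in s, f x ∂μ) / (μ s).toReal

/-- The martingale (Haar) difference `Δ_Q^μ f`. -/
def haarDiff {n : ℕ} (μ : Measure (Pt n)) (Q : Cube n) (f : Pt n → ℝ) (x : Pt n) : ℝ :=
  ∑ e : Fin n → Bool,
    Set.indicator (Q.child e).set (fun _ => cubeAvg μ (Q.child e).set f - cubeAvg μ Q.set f) x

/-- `J` is `(r,ε)`-deeply embedded in `K`. -/
def deepEmb {n : ℕ} (r : ℕ) (ε : ℝ) (J K : Cube n) : Prop :=
  J.set ⊆ K.set ∧ (2:ℝ) ^ r * J.l ≤ K.l ∧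
    ENNReal.ofReal (J.l ^ ε * K.l ^ (1 - ε) / 2) ≤ sDistE J.set (frontier K.set)

/-- The maximal `(r,ε)`-deeply embedded dyadic subcubes of `K` from the grid `t`. -/
def maxDeep {n : ℕ} (r : ℕ) (ε : ℝ) (t : Pt n) (K : Cube n) : Set (Cube n) :=
  {J | J ∈ gridCubes t ∧ deepEmb r ε J K ∧
    ∀ J' ∈ gridCubes t, J.set ⊆ J'.set → deepEmb r ε J' K → J' = J}

/-- The grid children of a (possibly alternate) cube `K`. -/
def gridChildren {n : ℕ} (t : Pt n) (K : Cube n) : Set (Cube n) :=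
  {K' | K' ∈ gridCubes t ∧ K'.l = K.l / 2 ∧ K'.set ⊆ K.set}

/-- `P = π^ℓ K'` is the `ℓ`-fold grid ancestor of `K'`. -/
def gridAncestor {n : ℕ} (t : Pt n) (lev : ℕ) (K' P : Cube n) : Prop :=
  P ∈ gridCubes t ∧ P.l = (2:ℝ) ^ lev * K'.l ∧ K'.set ⊆ P.set

/-- The refinement `M^ℓ_{(r,ε)-deep,𝒟}(K)` of the maximal deeply embedded collection. -/
def maxDeepRef {n : ℕ} (r : ℕ) (ε : ℝ) (t : Pt n) (lev : ℕ) (K : Cube n) : Set (Cube n) :=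
  {J | (∃ K' ∈ gridChildren t K, ∃ P : Cube n, gridAncestor t lev K' P ∧ J ∈ maxDeep r ε t P) ∧
       ∃ L ∈ maxDeep r ε t K, J.set ⊆ L.set}

/-- The `ω`-average (barycenter) of the identity over the quasicube `Ω J`. -/
def cubeAvgVec {n : ℕ} (Om : Pt n → Pt n) (ω : Measure (Pt n)) (J : Cube n) : Pt n :=
  ((ω (qset Om J)).toReal)⁻¹ • ∫ x in qset Om J, x ∂ω

/-- The energy `‖P^ω_{ΩJ} x‖²_{L²(ω)} = ∫_{ΩJ} |x - E_{ΩJ}^ω x|² dω`. -/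
def energyTerm {n : ℕ} (Om : Pt n → Pt n) (ω : Measure (Pt n)) (J : Cube n) : ℝ≥0∞ :=
  ∫⁻ x in qset Om J, ENNReal.ofReal (‖x - cubeAvgVec Om ω J‖ ^ 2) ∂ω

/-- The energy sum `Σ_{J ∈ 𝒥} (P^α(J, 1_I σ)/ℓ(J))² ‖P_J^ω x‖²`. -/
def energySum {n : ℕ} (α : ℝ) (Om : Pt n → Pt n) (σ ω : Measure (Pt n)) (I : Cube n)
    (𝒥 : Set (Cube n)) : ℝ≥0∞ :=
  ∑' J : 𝒥, (stdPoisson α Om (J : Cube n) (σ.restrict (qset Om I)) /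
      ENNReal.ofReal ((J : Cube n).l)) ^ 2 * energyTerm Om ω (J : Cube n)

/-- `Ir` is a partition of `I` into dyadic subcubes from the grid `t`. -/
def isGridPartition {n : ℕ} (t : Pt n) (I : Cube n) (Ir : ℕ → Cube n) : Prop :=
  (∀ k, Ir k ∈ gridCubes t) ∧ (∀ k, (Ir k).set ⊆ I.set) ∧
  (∀ k k', k ≠ k' → Disjoint (Ir k).set (Ir k').set) ∧ (⋃ k, (Ir k).set) = I.set

/-- The strong energy constant `ℰ_α^{strong}(σ,ω)` with goodness parameters `r, ε`. -/
def strongEnergy {n : ℕ} (r : ℕ) (ε α : ℝ) (Om : Pt n → Pt n) (σ ω : Measure (Pt n)) : ℝ≥0∞ :=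
  sInf {E : ℝ≥0∞ |
    (∀ (t : Pt n) (I : Cube n), I ∈ gridCubes t → ∀ Ir : ℕ → Cube n, isGridPartition t I Ir →
      (∑' k : ℕ, energySum α Om σ ω I (maxDeep r ε t (Ir k))) ≤ E ^ 2 * σ (qset Om I)) ∧
    (∀ (t : Pt n) (I : Cube n), I ∈ altCubes t → ∀ lev : ℕ,
      energySum α Om σ ω I (maxDeepRef r ε t lev I) ≤ E ^ 2 * σ (qset Om I))}

/-- The translation `γ` of step `2^{-M}` indexed by `idx`. -/
def gamOf {n : ℕ} (M : ℕ) {Kc : ℕ} (idx : Fin n → Fin Kc) : Pt n :=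
  WithLp.toLp 2 fun i => (idx i : ℝ) * (2:ℝ) ^ (-(M : ℤ))

/-- The truncated dyadic grid built on `𝔻_M`, of size `2^{-N}`, translated by `γ`. -/
def truncGrid {n : ℕ} (M : ℕ) (N : ℤ) (γ : Pt n) : Set (Cube n) :=
  {Q | ∃ (k : ℤ) (m : Fin n → ℤ), -(M : ℤ) ≤ k ∧ k ≤ -N ∧ Q = dCube γ k m}

/-- The siblings of `Q`: the `3ⁿ` triadic children of `3Q`. -/
def siblings {n : ℕ} (Q : Cube n) : Set (Cube n) :=
  {Q' | ∃ a : Fin n → Fin 3, Q'.l = Q.l ∧ ∀ i, Q'.c i = Q.c i + ((a i : ℝ) - 1) * Q.l}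

/-- A grid `𝒟` is `Q`-good for the goodness parameters `r, ε`. -/
def QGoodGrid {n : ℕ} (r : ℕ) (ε : ℝ) (Q : Cube n) (𝒟 : Set (Cube n)) : Prop :=
  ∀ Q' ∈ siblings Q, ∀ I ∈ 𝒟, (2:ℝ) ^ r * Q.l ≤ I.l →
    ENNReal.ofReal (Q'.l ^ ε * I.l ^ (1 - ε) / 2) ≤ sDistE Q'.set (frontier I.set)

/-- A cube `I` is `r`-good in the grid `𝒟`. -/
def rGoodIn {n : ℕ} (r : ℕ) (ε : ℝ) (I : Cube n) (𝒟 : Set (Cube n)) : Prop :=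
  ∀ K ∈ 𝒟, (2:ℝ) ^ r * I.l ≤ K.l →
    ENNReal.ofReal (I.l ^ ε * K.l ^ (1 - ε) / 2) ≤ sDistE I.set (frontier K.set)

/-- The good projection `P^μ_{Q;good} f` relative to the grid `𝒟`. -/
def projGood {n : ℕ} (r : ℕ) (ε : ℝ) (Q : Cube n) (𝒟 : Set (Cube n)) (μ : Measure (Pt n))
    (f : Pt n → ℝ) (x : Pt n) : ℝ :=
  if QGoodGrid r ε Q 𝒟 then
    ∑' I : {I : Cube n // I ∈ 𝒟 ∧ rGoodIn r ε I 𝒟}, haarDiff μ (I : Cube n) f x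
  else 0

/-- The bad projection `P^μ_{Q;bad} f = f - P^μ_{Q;good} f`. -/
def projBad {n : ℕ} (r : ℕ) (ε : ℝ) (Q : Cube n) (𝒟 : Set (Cube n)) (μ : Measure (Pt n))
    (f : Pt n → ℝ) (x : Pt n) : ℝ := f x - projGood r ε Q 𝒟 μ f x

/-- An 'appropriate' function: supported in a cube `L` with mean zero, with `−N > ℓ(L) + r`,
and constant on the tiles of `𝔻_M`. -/
def Appropriate {n : ℕ} (μ : Measure (Pt n)) (M : ℕ) (N : ℤ) (r : ℕ) (f : Pt n → ℝ) : Prop :=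
  ∃ L : Cube n, (∀ x, x ∉ L.set → f x = 0) ∧ (∫ x in L.set, f x ∂μ) = 0 ∧
    L.l + (r : ℝ) < (-N : ℝ) ∧
    ∀ m : Fin n → ℤ, ∀ x ∈ (dCube 0 (-(M : ℤ)) m).set, ∀ y ∈ (dCube 0 (-(M : ℤ)) m).set, f x = f y

/-- Pairs `(I,J)` of grid cubes with `J ⊂ 3I` and `ρ`-comparable side lengths. -/
def pairsNear {n : ℕ} (t : Pt n) (ρ : ℕ) : Set (Cube n × Cube n) :=
  {p | p.1 ∈ gridCubes t ∧ p.2 ∈ gridCubes t ∧ p.2.set ⊆ p.1.tri.set ∧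
       (2:ℝ) ^ (-(ρ:ℤ)) * p.1.l ≤ p.2.l ∧ p.2.l ≤ (2:ℝ) ^ (ρ:ℤ) * p.1.l}

/-- Pairs `(I,J)` of grid cubes with `I ⊂ 3J` and `ρ`-comparable side lengths. -/
def pairsNear' {n : ℕ} (t : Pt n) (ρ : ℕ) : Set (Cube n × Cube n) :=
  {p | p.1 ∈ gridCubes t ∧ p.2 ∈ gridCubes t ∧ p.1.set ⊆ p.2.tri.set ∧
       (2:ℝ) ^ (-(ρ:ℤ)) * p.1.l ≤ p.2.l ∧ p.2.l ≤ (2:ℝ) ^ (ρ:ℤ) * p.1.l}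

/-- The inner product `⟨T^α_σ Δ_I^σ f, Δ_J^ω g⟩_ω`. -/
def innerTT {n : ℕ} {α : ℝ} {K : CZKernel n α} (τ : Truncation K) (σ ω : Measure (Pt n))
    (I J : Cube n) (f g : Pt n → ℝ) : ℝ :=
  ∫ x, τ.op σ (haarDiff σ I f) x * haarDiff ω J g x ∂ω

/-- The form `A₁(f,g)`, summing over comparable nearby pairs with `J ⊂ 3I`. -/
def formA1 {n : ℕ} {α : ℝ} {K : CZKernel n α} (τ : Truncation K) (σ ω : Measure (Pt n))
    (t : Pt n) (ρ : ℕ) (f g : Pt n → ℝ) : ℝ :=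
  ∑' p : pairsNear t ρ, innerTT τ σ ω p.1.1 p.1.2 f g

/-- The form `A₂(f,g)`, summing over comparable nearby pairs with `I ⊂ 3J`. -/
def formA2 {n : ℕ} {α : ℝ} {K : CZKernel n α} (τ : Truncation K) (σ ω : Measure (Pt n))
    (t : Pt n) (ρ : ℕ) (f g : Pt n → ℝ) : ℝ :=
  ∑' p : pairsNear' t ρ, innerTT τ σ ω p.1.1 p.1.2 f g

/-- `I` and `J` are `r`-close in the grid `t`: comparable side lengths, touching,
and one contained in the triple of the other. -/
def rClosePairs {n : ℕ} (t : Pt n) (r : ℕ) : Set (Cube n × Cube n) :=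
  {p | p.1 ∈ gridCubes t ∧ p.2 ∈ gridCubes t ∧
       (2:ℝ) ^ (-(r:ℤ)) * p.1.l ≤ p.2.l ∧ p.2.l ≤ (2:ℝ) ^ (r:ℤ) * p.1.l ∧
       Touching p.1 p.2 ∧ (p.1.set ⊆ p.2.tri.set ∨ p.2.set ⊆ p.1.tri.set)}

/-- The bilinear form `ℬ(f,g) = ⟨T_σ^α f, g⟩_ω`. -/
def formB {n : ℕ} {α : ℝ} {K : CZKernel n α} (τ : Truncation K) (σ ω : Measure (Pt n))
    (f g : Pt n → ℝ) : ℝ := ∫ x, τ.op σ f x * g x ∂ω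

/-- The bilinear form `𝒞_𝒟(f,g)`, summing over `r`-close pairs in the grid. -/
def formC {n : ℕ} {α : ℝ} {K : CZKernel n α} (τ : Truncation K) (σ ω : Measure (Pt n))
    (t : Pt n) (r : ℕ) (f g : Pt n → ℝ) : ℝ :=
  ∑' p : rClosePairs t r, innerTT τ σ ω p.1.1 p.1.2 f g

/-- The subbilinear form `𝒮_𝒟(f,g)`, summing absolute values over `r`-close pairs. -/
def formS {n : ℕ} {α : ℝ} {K : CZKernel n α} (τ : Truncation K) (σ ω : Measure (Pt n))
    (t : Pt n) (r : ℕ) (f g : Pt n → ℝ) : ℝ≥0∞ :=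
  ∑' p : rClosePairs t r, ENNReal.ofReal |innerTT τ σ ω p.1.1 p.1.2 f g|

/-- Two cubes are `ρ`-close: `ρ`-comparable side lengths, in a common grid, touching, and
one contained in the triple of the other. -/
def rhoClose {n : ℕ} (ρ : ℕ) (Q R : Cube n) : Prop :=
  (2:ℝ) ^ (-(ρ:ℤ)) * Q.l ≤ R.l ∧ R.l ≤ (2:ℝ) ^ (ρ:ℤ) * Q.l ∧
  (∃ t : Pt n, Q ∈ gridCubes t ∧ R ∈ gridCubes t) ∧
  Touching Q R ∧ (Q.set ⊆ R.tri.set ∨ R.set ⊆ Q.tri.set)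

/-- The proportion of the `ν`-mass of `S` carried by `R`. -/
def massRatio (ν : Measure ℝ) (S R : Set ℝ) : ℝ := ν.real (S ∩ R) / ν.real S

lemma massRatio_nonneg (ν : Measure ℝ) (S R : Set ℝ) : 0 ≤ massRatio ν S R := by
  unfold massRatio; positivity

lemma massRatio_le_one {ν : Measure ℝ} {S : Set ℝ} (hS : ν S ≠ ⊤) (R : Set ℝ) :
    massRatio ν S R ≤ 1 :=
  div_le_one_of_le₀ (measureReal_mono inter_subset_left hS) measureReal_nonneg

lemma massRatio_eq_zero (ν : Measure ℝ) {S R : Set ℝ} (h : Disjoint S R) :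
    massRatio ν S R = 0 := by
  simp [massRatio, h.inter_eq]

lemma massRatio_sq_mul_le_measureReal {ν : Measure ℝ} {S P : Set ℝ} (hS : ν S ≠ ⊤) (R : Set ℝ) :
    massRatio ν S R ^ 2 * ν.real P ≤ ν.real P := by
  have h0 := massRatio_nonneg ν S R
  have h1 := massRatio_le_one hS R
  exact mul_le_of_le_one_left measureReal_nonneg (pow_le_one₀ h0 h1)

lemma massRatio_sq_mul_le {ν : Measure ℝ} {S R P : Set ℝ} (hS : ν S ≠ ⊤) (hR : ν R ≠ ⊤)
    (hP : P ⊆ S) : massRatio ν S R ^ 2 * ν.real P ≤ ν.real R := by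
  have h0 := massRatio_nonneg ν S R
  have h1 := massRatio_le_one hS R
  have hPS : ν.real P ≤ ν.real S := measureReal_mono hP hS
  have hm : massRatio ν S R * ν.real S ≤ ν.real (S ∩ R) := by
    unfold massRatio
    rcases (measureReal_nonneg : 0 ≤ ν.real S).eq_or_lt with h | h
    · rw [← h, mul_zero]; positivity
    · rw [div_mul_cancel₀ _ h.ne']
  have hI : ν.real (S ∩ R) ≤ ν.real R := measureReal_mono inter_subset_right hR
  calc massRatio ν S R ^ 2 * ν.real P ≤ massRatio ν S R ^ 2 * ν.real S := by gcongr
    _ = massRatio ν S R * (massRatio ν S R * ν.real S) := by ring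
    _ ≤ 1 * ν.real (S ∩ R) := by gcongr
    _ ≤ ν.real R := by linarith

/-- A piece `P ⊆ Z \ Z'` of a part `Z` of `S` lying off `R` is controlled by the increment of
`M² / (ν(·) + M)` between `Z` and `Z'`, where `M = ν(R)`. -/
lemma massRatio_sq_mul_le_sub {ν : Measure ℝ} {S R Z Z' P : Set ℝ} (hS : ν S ≠ ⊤) (hR : ν R ≠ ⊤)
    (hRm : MeasurableSet R) (hSm : MeasurableSet S) (hZm' : MeasurableSet Z')
    (hZS : Z ⊆ S) (hZZ : Z' ⊆ Z) (hZR : Disjoint Z R) (hP : P ⊆ Z \ Z') :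
    massRatio ν S R ^ 2 * ν.real P ≤
      ν.real R ^ 2 / (ν.real Z' + ν.real R) - ν.real R ^ 2 / (ν.real Z + ν.real R) := by
  have hZ : ν Z ≠ ⊤ := measure_ne_top_of_subset hZS hS
  have hI : ν.real (S ∩ R) ≤ ν.real R := measureReal_mono inter_subset_right hR
  have hPm : ν.real P ≤ ν.real Z - ν.real Z' := by
    rw [← measureReal_sdiff hZZ hZm' hZ]
    exact measureReal_mono hP (measure_ne_top_of_subset sdiff_subset hZ)
  have hsum : ν.real Z + ν.real (S ∩ R) ≤ ν.real S := by
    rw [← measureReal_union (hZR.mono_right inter_subset_right) (hSm.inter hRm) hZ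
      (measure_ne_top_of_subset inter_subset_left hS)]
    exact measureReal_mono (union_subset hZS inter_subset_left) hS
  have hi0 : 0 ≤ ν.real (S ∩ R) := measureReal_nonneg
  have hZ0 : 0 ≤ ν.real Z := measureReal_nonneg
  have hZ0' : 0 ≤ ν.real Z' := measureReal_nonneg
  have hP0 : 0 ≤ ν.real P := measureReal_nonneg
  rcases (measureReal_nonneg : 0 ≤ ν.real R).eq_or_lt with hM | hM
  · have : ν.real (S ∩ R) = 0 := le_antisymm (hM ▸ hI) hi0
    simp [massRatio, this, ← hM]
  have hr : massRatio ν S R ≤ ν.real R / (ν.real Z + ν.real R) := by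
    unfold massRatio
    rcases hi0.eq_or_lt with h | h
    · rw [← h, zero_div]; positivity
    rw [div_le_div_iff₀ (by linarith) (by positivity)]
    nlinarith
  calc massRatio ν S R ^ 2 * ν.real P
      ≤ (ν.real R / (ν.real Z + ν.real R)) ^ 2 * (ν.real Z - ν.real Z') := by
        have := massRatio_nonneg ν S R
        gcongr
    _ ≤ ν.real R ^ 2 * (ν.real Z - ν.real Z') /
          ((ν.real Z' + ν.real R) * (ν.real Z + ν.real R)) := by
        rw [div_pow, div_mul_eq_mul_div]
        apply div_le_div_of_nonneg_left
        · have : 0 ≤ ν.real Z - ν.real Z' := hP0.trans hPm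
          positivity
        · positivity
        · rw [sq]
          gcongr
    _ = _ := by
        field_simp
        ring

/-- A bounded monotone function whose increments dominate the contributions of the left
boundary pieces. -/
def leftPotential (ν : Measure ℝ) (r r' x : ℝ) : ℝ :=
  ν.real (Ico r r') ^ 2 / (ν.real (Ico x r) + ν.real (Ico r r')) - ν.real (Ico r r' ∩ Ici x) +
    (if r ≤ x then ν.real (Ico r r') else 0) + (if r' ≤ x then ν.real (Ico r r') else 0)

/-- A bounded monotone function whose increments dominate the contributions of the right
boundary pieces. -/
def rightPotential (ν : Measure ℝ) (r r' y : ℝ) : ℝ :=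
  -(ν.real (Ico r r') ^ 2 / (ν.real (Ico r' y) + ν.real (Ico r r'))) + ν.real (Ico r r' ∩ Iio y) +
    (if r < y then ν.real (Ico r r') else 0) + (if r' < y then ν.real (Ico r r') else 0)

lemma sq_div_add_mono {M a b : ℝ} (hM : 0 ≤ M) (ha : 0 ≤ a) (hab : a ≤ b) :
    M ^ 2 / (b + M) ≤ M ^ 2 / (a + M) := by
  rcases hM.eq_or_lt with rfl | h
  · simp
  · gcongr

lemma sq_div_add_le {M a : ℝ} (hM : 0 ≤ M) (ha : 0 ≤ a) : M ^ 2 / (a + M) ≤ M := by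
  apply div_le_of_le_mul₀ (by positivity) hM
  nlinarith

lemma ite_le_ite_of_imp {p q : Prop} [Decidable p] [Decidable q] {M : ℝ} (hM : 0 ≤ M)
    (h : p → q) : (if p then M else 0) ≤ (if q then M else 0) := by
  split_ifs <;> simp_all

lemma leftPotential_mem {ν : Measure ℝ} (hν : ∀ a b, ν (Ico a b) ≠ ⊤) (r r' x : ℝ) :
    leftPotential ν r r' x ∈ Icc (-ν.real (Ico r r')) (3 * ν.real (Ico r r')) := by
  have hM : 0 ≤ ν.real (Ico r r') := measureReal_nonneg
  have h1 := sq_div_add_le hM (measureReal_nonneg : 0 ≤ ν.real (Ico x r))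
  have h1' : 0 ≤ ν.real (Ico r r') ^ 2 / (ν.real (Ico x r) + ν.real (Ico r r')) := by positivity
  have h2 : ν.real (Ico r r' ∩ Ici x) ≤ ν.real (Ico r r') :=
    measureReal_mono inter_subset_left (hν _ _)
  have h2' : 0 ≤ ν.real (Ico r r' ∩ Ici x) := measureReal_nonneg
  unfold leftPotential
  constructor <;> split_ifs <;> linarith

lemma rightPotential_mem {ν : Measure ℝ} (hν : ∀ a b, ν (Ico a b) ≠ ⊤) (r r' y : ℝ) :
    rightPotential ν r r' y ∈ Icc (-ν.real (Ico r r')) (3 * ν.real (Ico r r')) := by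
  have hM : 0 ≤ ν.real (Ico r r') := measureReal_nonneg
  have h1 := sq_div_add_le hM (measureReal_nonneg : 0 ≤ ν.real (Ico r' y))
  have h1' : 0 ≤ ν.real (Ico r r') ^ 2 / (ν.real (Ico r' y) + ν.real (Ico r r')) := by positivity
  have h2 : ν.real (Ico r r' ∩ Iio y) ≤ ν.real (Ico r r') :=
    measureReal_mono inter_subset_left (hν _ _)
  have h2' : 0 ≤ ν.real (Ico r r' ∩ Iio y) := measureReal_nonneg
  unfold rightPotential
  constructor <;> split_ifs <;> linarith

lemma massRatio_sq_mul_le_leftPotential_sub {ν : Measure ℝ} (hν : ∀ a b, ν (Ico a b) ≠ ⊤) (r r' : ℝ)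
    {x y s : ℝ} (hs : 0 < s) {P : Set ℝ} (hP : P ⊆ Icc x (x + s)) (hPS : P ⊆ Ico x y) :
    massRatio ν (Ico x y) (Ico r r') ^ 2 * ν.real P ≤
      leftPotential ν r r' (x + 2 * s) - leftPotential ν r r' x := by
  have hM : 0 ≤ ν.real (Ico r r') := measureReal_nonneg
  have h1 := sq_div_add_mono hM (measureReal_nonneg : 0 ≤ ν.real (Ico (x + 2 * s) r))
    (measureReal_mono (Ico_subset_Ico_left (by linarith : x ≤ x + 2 * s)) (hν x r))
  have h2 : ν.real (Ico r r' ∩ Ici (x + 2 * s)) ≤ ν.real (Ico r r' ∩ Ici x) :=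
    measureReal_mono (inter_subset_inter_right _ (Ici_subset_Ici.2 (by linarith)))
      (measure_ne_top_of_subset inter_subset_left (hν _ _))
  have h3 := ite_le_ite_of_imp hM (fun h : r ≤ x => (by linarith : r ≤ x + 2 * s))
  have h4 := ite_le_ite_of_imp hM (fun h : r' ≤ x => (by linarith : r' ≤ x + 2 * s))
  have hmain := massRatio_sq_mul_le (hν x y) (hν r r') hPS
  unfold leftPotential
  by_cases hD : r' ≤ x
  · rw [massRatio_eq_zero]
    · linarith
    · exact Set.disjoint_left.2 fun z hz hz' => by linarith [hz.1, hz'.2]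
  by_cases hC : x < r ∧ r ≤ x + 2 * s
  · rw [if_pos hC.2, if_neg hC.1.not_ge] at *
    linarith
  by_cases hC' : r' ≤ x + 2 * s
  · rw [if_pos hC', if_neg hD] at *
    linarith
  by_cases hB : r ≤ x
  · have h5 : ν.real P ≤ ν.real (Ico r r' ∩ Ici x) - ν.real (Ico r r' ∩ Ici (x + 2 * s)) := by
      rw [← measureReal_sdiff (inter_subset_inter_right _ (Ici_subset_Ici.2 (by linarith)))
        (measurableSet_Ico.inter measurableSet_Ici)
        (measure_ne_top_of_subset inter_subset_left (hν _ _))]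
      refine measureReal_mono (fun z hz => ?_)
        (measure_ne_top_of_subset (sdiff_subset.trans inter_subset_left) (hν r r'))
      obtain ⟨hz1, hz2⟩ := hP hz
      refine ⟨⟨⟨by linarith, by linarith⟩, hz1⟩, fun h => ?_⟩
      have : x + 2 * s ≤ z := h.2
      linarith
    have := massRatio_sq_mul_le_measureReal (P := P) (hν x y) (Ico r r')
    linarith
  have hA : x + 2 * s < r := by
    by_contra! h
    exact hC ⟨by linarith, h⟩
  by_cases hy : y ≤ r
  · rw [massRatio_eq_zero]
    · linarith
    · exact Set.disjoint_left.2 fun z hz hz' => by linarith [hz.2, hz'.1]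
  have := massRatio_sq_mul_le_sub (P := P) (Z := Ico x r) (Z' := Ico (x + 2 * s) r)
    (hν x y) (hν r r') measurableSet_Ico measurableSet_Ico measurableSet_Ico
    (Ico_subset_Ico_right (by linarith)) (Ico_subset_Ico_left (by linarith))
    (Set.disjoint_left.2 fun z hz hz' => by linarith [hz.2, hz'.1])
    (fun z hz => ⟨⟨(hP hz).1, by linarith [(hP hz).2]⟩, fun h => by linarith [(hP hz).2, h.1]⟩)
  linarith

lemma massRatio_sq_mul_le_rightPotential_sub {ν : Measure ℝ} (hν : ∀ a b, ν (Ico a b) ≠ ⊤) (r r' : ℝ)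
    {x y s : ℝ} (hs : 0 < s) {P : Set ℝ} (hP : P ⊆ Ico (y - s) y) (hPS : P ⊆ Ico x y) :
    massRatio ν (Ico x y) (Ico r r') ^ 2 * ν.real P ≤
      rightPotential ν r r' y - rightPotential ν r r' (y - s) := by
  have hM : 0 ≤ ν.real (Ico r r') := measureReal_nonneg
  have h1 := sq_div_add_mono hM (measureReal_nonneg : 0 ≤ ν.real (Ico r' (y - s)))
    (measureReal_mono (Ico_subset_Ico_right (by linarith : y - s ≤ y)) (hν r' y))
  have h2 : ν.real (Ico r r' ∩ Iio (y - s)) ≤ ν.real (Ico r r' ∩ Iio y) :=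
    measureReal_mono (inter_subset_inter_right _ (Iio_subset_Iio (by linarith)))
      (measure_ne_top_of_subset inter_subset_left (hν _ _))
  have h3 := ite_le_ite_of_imp hM (fun h : r < y - s => (by linarith : r < y))
  have h4 := ite_le_ite_of_imp hM (fun h : r' < y - s => (by linarith : r' < y))
  have hmain := massRatio_sq_mul_le (hν x y) (hν r r') hPS
  unfold rightPotential
  by_cases hD : y ≤ r
  · rw [massRatio_eq_zero]
    · linarith
    · exact Set.disjoint_left.2 fun z hz hz' => by linarith [hz.2, hz'.1]
  by_cases hC : y - s ≤ r
  · rw [if_pos (not_le.1 hD), if_neg hC.not_gt] at *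
    linarith
  by_cases hC' : y - s ≤ r' ∧ r' < y
  · rw [if_pos hC'.2, if_neg hC'.1.not_gt] at *
    linarith
  by_cases hB : y ≤ r'
  · have h5 : ν.real P ≤ ν.real (Ico r r' ∩ Iio y) - ν.real (Ico r r' ∩ Iio (y - s)) := by
      rw [← measureReal_sdiff (inter_subset_inter_right _ (Iio_subset_Iio (by linarith)))
        (measurableSet_Ico.inter measurableSet_Iio)
        (measure_ne_top_of_subset inter_subset_left (hν _ _))]
      refine measureReal_mono (fun z hz => ?_)
        (measure_ne_top_of_subset (sdiff_subset.trans inter_subset_left) (hν r r'))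
      obtain ⟨hz1, hz2⟩ := hP hz
      refine ⟨⟨⟨by linarith, by linarith⟩, hz2⟩, fun h => ?_⟩
      have : z < y - s := h.2
      linarith
    have := massRatio_sq_mul_le_measureReal (P := P) (hν x y) (Ico r r')
    linarith
  have hA : r' < y - s := by
    by_contra! h
    exact hC' ⟨h, by linarith⟩
  by_cases hx : r' ≤ x
  · rw [massRatio_eq_zero]
    · linarith
    · exact Set.disjoint_left.2 fun z hz hz' => by linarith [hz.1, hz'.2]
  have := massRatio_sq_mul_le_sub (P := P) (Z := Ico r' y) (Z' := Ico r' (y - s))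
    (hν x y) (hν r r') measurableSet_Ico measurableSet_Ico measurableSet_Ico
    (Ico_subset_Ico_left (by linarith)) (Ico_subset_Ico_right (by linarith))
    (Set.disjoint_left.2 fun z hz hz' => by linarith [hz.1, hz'.2])
    (fun z hz => ⟨⟨by linarith [(hP hz).1], (hP hz).2⟩, fun h => by linarith [(hP hz).1, h.2]⟩)
  linarith

lemma leftPotential_mono {ν : Measure ℝ} (hν : ∀ a b, ν (Ico a b) ≠ ⊤) (r r' : ℝ) :
    Monotone (leftPotential ν r r') := by
  intro x z hxz
  rcases hxz.eq_or_lt with rfl | hlt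
  · exact le_rfl
  have := massRatio_sq_mul_le_leftPotential_sub hν r r' (x := x) (y := x) (s := (z - x) / 2)
    (by linarith) (empty_subset _) (empty_subset _)
  rw [show x + 2 * ((z - x) / 2) = z by ring] at this
  simpa using this

lemma rightPotential_mono {ν : Measure ℝ} (hν : ∀ a b, ν (Ico a b) ≠ ⊤) (r r' : ℝ) :
    Monotone (rightPotential ν r r') := by
  intro x z hxz
  rcases hxz.eq_or_lt with rfl | hlt
  · exact le_rfl
  have := massRatio_sq_mul_le_rightPotential_sub hν r r' (x := z) (y := z) (s := z - x)
    (by linarith) (empty_subset _) (empty_subset _)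
  rw [show z - (z - x) = x by ring] at this
  simpa using this

lemma sub_sq_mul_le {p q t B : ℝ} (hp : 0 ≤ p) (hq : 0 ≤ q) (ht : 0 ≤ t) (hpB : p ^ 2 * t ≤ B)
    (hqB : q ^ 2 * t ≤ B) : (p - q) ^ 2 * t ≤ B := by
  rcases le_total p q with h | h
  · exact le_trans (mul_le_mul_of_nonneg_right (by nlinarith) ht) hqB
  · exact le_trans (mul_le_mul_of_nonneg_right (by nlinarith) ht) hpB

/-- The coordinate projection of the one-dimensional Euclidean space. -/
def lineCoord (x : Pt 1) : ℝ := x 0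

lemma continuous_lineCoord : Continuous lineCoord := by
  unfold lineCoord; fun_prop

lemma measurable_lineCoord : Measurable lineCoord := continuous_lineCoord.measurable

lemma dist_eq_abs_lineCoord (x y : Pt 1) : dist x y = |lineCoord x - lineCoord y| := by
  rw [EuclideanSpace.dist_eq]
  simp [lineCoord, Real.dist_eq, Real.sqrt_sq_eq_abs]

lemma Cube.set_eq_preimage (Q : Cube 1) : Q.set = lineCoord ⁻¹' Ico (Q.c 0) (Q.c 0 + Q.l) := by
  ext x; simp [Cube.set, lineCoord]

lemma map_lineCoord_Ico_ne_top (ω : Measure (Pt 1)) [IsLocallyFiniteMeasure ω] (a b : ℝ) :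
    ω.map lineCoord (Ico a b) ≠ ⊤ := by
  rw [Measure.map_apply measurable_lineCoord measurableSet_Ico]
  refine (Metric.isBounded_iff.2 ⟨b - a, fun x hx y hy => ?_⟩).measure_lt_top.ne
  rw [dist_eq_abs_lineCoord, abs_le]
  constructor <;> linarith [hx.1, hx.2, hy.1, hy.2]

lemma cubeAvg_indic (ω : Measure (Pt 1)) (Q R : Cube 1) :
    cubeAvg ω Q.set (indic R.set) = massRatio (ω.map lineCoord) (Ico (Q.c 0) (Q.c 0 + Q.l))
      (Ico (R.c 0) (R.c 0 + R.l)) := by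
  have hR : MeasurableSet R.set := by
    rw [Cube.set_eq_preimage]; exact measurable_lineCoord measurableSet_Ico
  rw [cubeAvg, massRatio, indic, integral_indicator_one hR, measureReal_restrict_apply hR,
    map_measureReal_apply measurable_lineCoord measurableSet_Ico,
    map_measureReal_apply measurable_lineCoord (measurableSet_Ico.inter measurableSet_Ico),
    preimage_inter, ← Cube.set_eq_preimage, ← Cube.set_eq_preimage, inter_comm]
  rfl

lemma haarDiff_of_mem_child (ω : Measure (Pt 1)) (Q : Cube 1) (f : Pt 1 → ℝ) (b : Bool) {x : Pt 1}
    (hx : x ∈ (Q.child fun _ => b).set) :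
    haarDiff ω Q f x = cubeAvg ω (Q.child fun _ => b).set f - cubeAvg ω Q.set f := by
  unfold haarDiff
  rw [Finset.sum_eq_single (fun _ => b), indicator_of_mem hx]
  · intro e _ he
    refine indicator_of_notMem (fun h => he ?_) _
    funext i
    rw [Subsingleton.elim i 0]
    have h1 := h 0
    have h2 := hx 0
    by_contra hne
    cases hb : b <;> cases hc : e 0 <;> simp_all [Cube.child] <;> linarith
  · simp

lemma Cube.lt_infDist_frontier {Q : Cube 1} {x : Pt 1} {d : ℝ} (h1 : Q.c 0 + d < x 0)
    (h2 : x 0 + d < Q.c 0 + Q.l) : d < Metric.infDist x (frontier Q.set) := by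
  have hsub : frontier Q.set ⊆ {z | lineCoord z = Q.c 0 ∨ lineCoord z = Q.c 0 + Q.l} := by
    rw [Cube.set_eq_preimage]
    intro z hz
    have := continuous_lineCoord.frontier_preimage_subset _ hz
    rwa [frontier_Ico (by linarith [Q.lpos])] at this
  have hne : (frontier Q.set).Nonempty := by
    rw [nonempty_frontier_iff]
    refine ⟨⟨Q.c, fun i => ⟨le_rfl, by linarith [Q.lpos]⟩⟩, fun h => ?_⟩
    have : (WithLp.toLp 2 (fun _ => Q.c 0 + Q.l) : Pt 1) ∈ Q.set := h ▸ mem_univ _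
    simpa using (this 0).2
  refine lt_of_lt_of_le (lt_min (show d < x 0 - Q.c 0 by linarith)
    (show d < Q.c 0 + Q.l - x 0 by linarith)) ((Metric.le_infDist hne).2 fun z hz => ?_)
  rw [dist_eq_abs_lineCoord]
  rcases hsub hz with h | h <;> rw [h]
  · exact (min_le_left _ _).trans (le_abs_self _)
  · refine (min_le_right _ _).trans ?_
    rw [abs_sub_comm]
    exact le_abs_self _

/-- Integrating the squared Haar difference of an indicator over a part of one child. -/
lemma lintegral_haarDiff_indic_le (ω : Measure (Pt 1)) [IsLocallyFiniteMeasure ω] (Q R : Cube 1)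
    (b : Bool) {A : Set (Pt 1)} {P : Set ℝ} {B : ℝ} (hA : MeasurableSet A)
    (hAc : A ⊆ (Q.child fun _ => b).set) (hAP : A ⊆ lineCoord ⁻¹' P) (hP : MeasurableSet P)
    (hPfin : ω.map lineCoord P ≠ ⊤)
    (hQ : massRatio (ω.map lineCoord) (Ico (Q.c 0) (Q.c 0 + Q.l))
      (Ico (R.c 0) (R.c 0 + R.l)) ^ 2 * (ω.map lineCoord).real P ≤ B)
    (hc : massRatio (ω.map lineCoord) (Ico ((Q.child fun _ => b).c 0)
        ((Q.child fun _ => b).c 0 + (Q.child fun _ => b).l))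
      (Ico (R.c 0) (R.c 0 + R.l)) ^ 2 * (ω.map lineCoord).real P ≤ B) :
    ∫⁻ x in A, ENNReal.ofReal ((haarDiff ω Q (indic R.set) x) ^ 2) ∂ω ≤ ENNReal.ofReal B := by
  set D := cubeAvg ω (Q.child fun _ => b).set (indic R.set) - cubeAvg ω Q.set (indic R.set)
    with hD
  have hconst : ∀ x ∈ A, ENNReal.ofReal ((haarDiff ω Q (indic R.set) x) ^ 2) =
      ENNReal.ofReal (D ^ 2) := fun x hx => by rw [haarDiff_of_mem_child ω Q _ b (hAc hx)]
  rw [setLIntegral_congr_fun hA hconst, setLIntegral_const]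
  calc ENNReal.ofReal (D ^ 2) * ω A
      ≤ ENNReal.ofReal (D ^ 2) * ENNReal.ofReal ((ω.map lineCoord).real P) := by
        rw [ofReal_measureReal hPfin, Measure.map_apply measurable_lineCoord hP]
        gcongr
    _ = ENNReal.ofReal (D ^ 2 * (ω.map lineCoord).real P) :=
        (ENNReal.ofReal_mul (sq_nonneg _)).symm
    _ ≤ ENNReal.ofReal B := by
        apply ENNReal.ofReal_le_ofReal
        rw [hD, cubeAvg_indic, cubeAvg_indic]
        exact sub_sq_mul_le (massRatio_nonneg ..) (massRatio_nonneg ..) measureReal_nonneg hc hQ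

lemma Cube.measurableSet_child_diff_inn (Q : Cube 1) (e : Fin 1 → Bool) (lam : ℝ) :
    MeasurableSet ((Q.child e).set \ Q.inn lam) := by
  have h (Q : Cube 1) : MeasurableSet Q.set := by
    rw [Cube.set_eq_preimage]; exact measurable_lineCoord measurableSet_Ico
  refine (h _).diff ((h Q).inter ?_)
  exact measurableSet_lt measurable_const (Metric.continuous_infDist_pt _).measurable

lemma lintegral_left_piece_le (ω : Measure (Pt 1)) [IsLocallyFiniteMeasure ω] (Q R : Cube 1)
    {lam : ℝ} (h0 : 0 < lam) (h1 : lam < 1 / 2) :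
    ∫⁻ x in (Q.child fun _ => false).set \ Q.inn lam,
        ENNReal.ofReal ((haarDiff ω Q (indic R.set) x) ^ 2) ∂ω ≤
      ENNReal.ofReal (leftPotential (ω.map lineCoord) (R.c 0) (R.c 0 + R.l)
          (Q.c 0 + 2 * (lam * Q.l)) -
        leftPotential (ω.map lineCoord) (R.c 0) (R.c 0 + R.l) (Q.c 0)) := by
  have hν := map_lineCoord_Ico_ne_top ω
  have hl := Q.lpos
  have hs : 0 < lam * Q.l := by positivity
  have hs2 : lam * Q.l < Q.l / 2 := by nlinarith
  refine lintegral_haarDiff_indic_le ω Q R false (P := Icc (Q.c 0) (Q.c 0 + lam * Q.l))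
    (Q.measurableSet_child_diff_inn _ _) sdiff_subset ?_ measurableSet_Icc
    (measure_ne_top_of_subset
      (Icc_subset_Ico_right (by linarith : Q.c 0 + lam * Q.l < Q.c 0 + Q.l)) (hν _ _)) ?_ ?_
  · rintro x ⟨hx, hxi⟩
    have hx0 : Q.c 0 ≤ x 0 ∧ x 0 < Q.c 0 + Q.l / 2 := by simpa [Cube.child] using hx 0
    refine ⟨hx0.1, ?_⟩
    by_contra! hlt
    have hlt' : Q.c 0 + lam * Q.l < x 0 := hlt
    refine hxi ⟨?_, Cube.lt_infDist_frontier hlt' (by linarith)⟩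
    rw [Cube.set_eq_preimage]
    exact ⟨hx0.1, show x 0 < _ by linarith⟩
  · exact massRatio_sq_mul_le_leftPotential_sub hν _ _ hs subset_rfl
      (fun z hz => ⟨hz.1, by linarith [hz.2]⟩)
  · have := massRatio_sq_mul_le_leftPotential_sub (y := Q.c 0 + Q.l / 2) hν (R.c 0)
      (R.c 0 + R.l) hs (subset_refl (Icc (Q.c 0) (Q.c 0 + lam * Q.l)))
      (fun z hz => ⟨hz.1, by linarith [hz.2]⟩)
    simpa [Cube.child] using this

lemma lintegral_right_piece_le (ω : Measure (Pt 1)) [IsLocallyFiniteMeasure ω] (Q R : Cube 1)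
    {lam : ℝ} (h0 : 0 < lam) (h1 : lam < 1 / 2) :
    ∫⁻ x in (Q.child fun _ => true).set \ Q.inn lam,
        ENNReal.ofReal ((haarDiff ω Q (indic R.set) x) ^ 2) ∂ω ≤
      ENNReal.ofReal (rightPotential (ω.map lineCoord) (R.c 0) (R.c 0 + R.l) (Q.c 0 + Q.l) -
        rightPotential (ω.map lineCoord) (R.c 0) (R.c 0 + R.l) (Q.c 0 + Q.l - lam * Q.l)) := by
  have hν := map_lineCoord_Ico_ne_top ω
  have hl := Q.lpos
  have hs : 0 < lam * Q.l := by positivity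
  have hs2 : lam * Q.l < Q.l / 2 := by nlinarith
  refine lintegral_haarDiff_indic_le ω Q R true
    (P := Ico (Q.c 0 + Q.l - lam * Q.l) (Q.c 0 + Q.l))
    (Q.measurableSet_child_diff_inn _ _) sdiff_subset ?_ measurableSet_Ico (hν _ _) ?_ ?_
  · rintro x ⟨hx, hxi⟩
    have hx0 : Q.c 0 + Q.l / 2 ≤ x 0 ∧ x 0 < Q.c 0 + Q.l / 2 + Q.l / 2 := by
      simpa [Cube.child] using hx 0
    refine ⟨?_, show x 0 < _ by linarith⟩
    by_contra! hlt
    have hlt' : x 0 < Q.c 0 + Q.l - lam * Q.l := hlt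
    refine hxi ⟨?_, Cube.lt_infDist_frontier (by linarith) (by linarith)⟩
    rw [Cube.set_eq_preimage]
    exact ⟨show _ ≤ x 0 by linarith, show x 0 < _ by linarith⟩
  · exact massRatio_sq_mul_le_rightPotential_sub hν _ _ hs subset_rfl
      (fun z hz => ⟨by linarith [hz.1], hz.2⟩)
  · have := massRatio_sq_mul_le_rightPotential_sub (x := Q.c 0 + Q.l / 2) hν (R.c 0)
      (R.c 0 + R.l) hs (subset_refl (Ico (Q.c 0 + Q.l - lam * Q.l) (Q.c 0 + Q.l)))
      (fun z hz => ⟨by linarith [hz.1], hz.2⟩)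
    have he : Q.c 0 + Q.l / 2 + Q.l / 2 = Q.c 0 + Q.l := by ring
    simpa [Cube.child, he] using this

/-- A sum of terms dominated by nonnegative real increments is dominated by any bound on the
sum of the increments; dividing by the number of terms gains a factor. -/
lemma sum_div_le_ofReal_mul {N : ℕ} (hN : 0 < N) {t : ℕ → ℝ≥0∞} {d : ℕ → ℝ}
    (ht : ∀ k, t k ≤ ENNReal.ofReal (d k)) (hd : ∀ k, 0 ≤ d k) {K M B : ℝ} (hM : 0 ≤ M)
    (hsum : ∑ k ∈ Finset.range N, d k ≤ K * M) (hB : K ≤ B * N) (hB0 : 0 ≤ B) :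
    (∑ k ∈ Finset.range N, t k) / (N : ℝ≥0∞) ≤ ENNReal.ofReal B * ENNReal.ofReal M := by
  have hN' : (N : ℝ≥0∞) ≠ 0 := by exact_mod_cast hN.ne'
  rw [ENNReal.div_le_iff hN' (ENNReal.natCast_ne_top N), ← ENNReal.ofReal_mul hB0,
    ← ENNReal.ofReal_natCast, ← ENNReal.ofReal_mul (by positivity)]
  calc ∑ k ∈ Finset.range N, t k ≤ ∑ k ∈ Finset.range N, ENNReal.ofReal (d k) :=
        Finset.sum_le_sum fun k _ => ht k
    _ = ENNReal.ofReal (∑ k ∈ Finset.range N, d k) :=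
        (ENNReal.ofReal_sum_of_nonneg fun k _ => hd k).symm
    _ ≤ ENNReal.ofReal (B * M * N) := by
        apply ENNReal.ofReal_le_ofReal
        nlinarith

lemma sum_range_add_two_sub (h : ℕ → ℝ) (N : ℕ) :
    ∑ k ∈ Finset.range N, (h (k + 2) - h k) = h (N + 1) + h N - h 1 - h 0 := by
  induction N with
  | zero => simp
  | succ n ih => rw [Finset.sum_range_succ, ih]; ring

/-- **One-dimensional surgery estimate.** Let `ω` be locally finite on `ℝ`, `J, R` be
`ρ`-close intervals, `λ ∈ (0,1/2)`. Averaging over `Λ` translations of step `λℓ(J)`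
covering an interval of length comparable to `ℓ(R)`,
`(1/Λ) Σ_γ ∫_{(J+γ)_λ^{left}} |Δ_{J+γ}^ω 1_R|² dω ≤ C √λ ω(R)` with `C` depending only
on `ρ`; and the same for the right boundary pieces. -/
theorem oneDimSurgeryEstimate (ρ : ℕ) :
    ∃ C : ℝ, 0 < C ∧
      ∀ ω : Measure (Pt 1), IsLocallyFiniteMeasure ω →
      ∀ J R : Cube 1, (2:ℝ) ^ (-(ρ:ℤ)) * R.l ≤ J.l → J.l ≤ (2:ℝ) ^ (ρ:ℤ) * R.l →
      (J.set ⊆ R.tri.set ∨ R.set ⊆ J.tri.set) →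
      (Touching J R ∨ J.set ⊆ R.set ∨ R.set ⊆ J.set) →
      ∀ lam : ℝ, 0 < lam → lam < 1/2 →
      ∀ Lam : ℕ, 0 < Lam → R.l ≤ (Lam : ℝ) * (lam * J.l) →
      (Lam : ℝ) * (lam * J.l) ≤ (2:ℝ) ^ (ρ:ℤ) * R.l →
      ((∑ k ∈ Finset.range Lam,
            ∫⁻ x in ((J.trans (WithLp.toLp 2 (fun _ => (k:ℝ) * (lam * J.l)) : Pt 1)).child fun _ => false).set \
                (J.trans (WithLp.toLp 2 (fun _ => (k:ℝ) * (lam * J.l)) : Pt 1)).inn lam,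
              ENNReal.ofReal
                ((haarDiff ω (J.trans (WithLp.toLp 2 (fun _ => (k:ℝ) * (lam * J.l)) : Pt 1)) (indic R.set) x) ^ 2) ∂ω) /
            (Lam : ℝ≥0∞)
          ≤ ENNReal.ofReal (C * Real.sqrt lam) * ω R.set) ∧
      ((∑ k ∈ Finset.range Lam,
            ∫⁻ x in ((J.trans (WithLp.toLp 2 (fun _ => (k:ℝ) * (lam * J.l)) : Pt 1)).child fun _ => true).set \
                (J.trans (WithLp.toLp 2 (fun _ => (k:ℝ) * (lam * J.l)) : Pt 1)).inn lam,
              ENNReal.ofReal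
                ((haarDiff ω (J.trans (WithLp.toLp 2 (fun _ => (k:ℝ) * (lam * J.l)) : Pt 1)) (indic R.set) x) ^ 2) ∂ω) /
            (Lam : ℝ≥0∞)
          ≤ ENNReal.ofReal (C * Real.sqrt lam) * ω R.set) := by
  refine ⟨8 * (2:ℝ) ^ (ρ:ℤ), by positivity, ?_⟩
  intro ω hω J R _ hJR _ _ lam h0 h1 N hN hRN _
  have hν := map_lineCoord_Ico_ne_top ω
  have hmassR : ω R.set =
      ENNReal.ofReal ((ω.map lineCoord).real (Ico (R.c 0) (R.c 0 + R.l))) := by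
    rw [ofReal_measureReal (hν _ _), Measure.map_apply measurable_lineCoord measurableSet_Ico,
      ← Cube.set_eq_preimage]
  have hM : 0 ≤ (ω.map lineCoord).real (Ico (R.c 0) (R.c 0 + R.l)) := measureReal_nonneg
  have hs : 0 < lam * J.l := mul_pos h0 J.lpos
  have hB : (8 : ℝ) ≤ 8 * (2:ℝ) ^ (ρ:ℤ) * Real.sqrt lam * N := by
    have hsq : lam ≤ Real.sqrt lam := Real.le_sqrt_of_sq_le (by nlinarith)
    have hR : 1 * R.l ≤ (2:ℝ) ^ (ρ:ℤ) * lam * N * R.l :=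
      calc 1 * R.l ≤ N * (lam * J.l) := by linarith
        _ ≤ N * (lam * ((2:ℝ) ^ (ρ:ℤ) * R.l)) := by gcongr
        _ = (2:ℝ) ^ (ρ:ℤ) * lam * N * R.l := by ring
    have h8 : (2:ℝ) ^ (ρ:ℤ) * lam * N ≤ (2:ℝ) ^ (ρ:ℤ) * Real.sqrt lam * N := by gcongr
    linarith [le_of_mul_le_mul_right hR R.lpos]
  rw [hmassR]
  constructor
  · set h : ℕ → ℝ := fun k => leftPotential (ω.map lineCoord) (R.c 0) (R.c 0 + R.l)
      (J.c 0 + k * (lam * J.l)) with hh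
    have hmem (k : ℕ) := leftPotential_mem hν (R.c 0) (R.c 0 + R.l) (J.c 0 + k * (lam * J.l))
    refine sum_div_le_ofReal_mul hN (d := fun k => h (k + 2) - h k) (K := 8)
      (fun k => ?_) (fun k => sub_nonneg.2 ?_) hM ?_ hB (by positivity)
    · refine (lintegral_left_piece_le ω _ R h0 h1).trans_eq ?_
      simp only [hh, Cube.trans]
      push_cast
      ring_nf
    · refine leftPotential_mono hν _ _ ?_
      push_cast
      linarith
    · rw [sum_range_add_two_sub]
      linarith [(hmem (N + 1)).2, (hmem N).2, (hmem 1).1, (hmem 0).1]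
  · set h : ℕ → ℝ := fun k => rightPotential (ω.map lineCoord) (R.c 0) (R.c 0 + R.l)
      (J.c 0 + J.l + (k - 1) * (lam * J.l)) with hh
    have hmem (k : ℕ) := rightPotential_mem hν (R.c 0) (R.c 0 + R.l)
      (J.c 0 + J.l + (k - 1) * (lam * J.l))
    refine sum_div_le_ofReal_mul hN (d := fun k => h (k + 1) - h k) (K := 8)
      (fun k => ?_) (fun k => sub_nonneg.2 ?_) hM ?_ hB (by positivity)
    · refine (lintegral_right_piece_le ω _ R h0 h1).trans_eq ?_
      simp only [hh, Cube.trans]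
      push_cast
      ring_nf
    · refine rightPotential_mono hν _ _ ?_
      push_cast
      linarith
    · rw [Finset.sum_range_sub]
      linarith [(hmem N).2, (hmem 0).1]
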